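/- arXiv:1201.5253 — 2 statements merged into one kernel-verified Lean document; each statement's English description precedes it below -/
import Mathlib

section
/- For every positive integer n, the Pfaffian of the 2n×2n skew-symmetric matrix whose (i,j) entry is (j−i)·M_{i+j−3} for 1 ≤ i,j ≤ 2n (with the convention that the (1,1) entry, whose factor j−i vanishes, is 0) equals ∏_{k=0}^{n−1} (4k+1). -/
/-- The Pfaffian of a `2N × 2N` matrix, defined as the sum over all partitions of
the index set into two-element blocks (encoded as permutations `σ` with
`σ(2i) < σ(2i+1)` and `σ(0) < σ(2) < … < σ(2N-2)`, one for each partition) of the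
sign of `σ` times the product `∏ i, A (σ (2i)) (σ (2i+1))`. -/
def pfaffian {R : Type*} [CommRing R] {N : ℕ}
    (A : Matrix (Fin (2 * N)) (Fin (2 * N)) R) : R :=
  ∑ σ ∈ Finset.univ.filter (fun σ : Equiv.Perm (Fin (2 * N)) =>
      (∀ i : Fin N, σ ⟨2 * i.val, by have := i.isLt; omega⟩
          < σ ⟨2 * i.val + 1, by have := i.isLt; omega⟩) ∧
      (∀ i j : Fin N, i < j → σ ⟨2 * i.val, by have := i.isLt; omega⟩
          < σ ⟨2 * j.val, by have := j.isLt; omega⟩)),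
    (Equiv.Perm.sign σ : ℤ) •
      ∏ i : Fin N, A (σ ⟨2 * i.val, by have := i.isLt; omega⟩)
        (σ ⟨2 * i.val + 1, by have := i.isLt; omega⟩)

/-- The `n`-th Motzkin number `M_n = ∑_{k=0}^{n} (1/(k+1))·C(n,2k)·C(2k,k)`. -/
def motzkin (n : ℕ) : ℚ :=
  ∑ k ∈ Finset.range (n + 1), (1 / ((k : ℚ) + 1)) * (n.choose (2 * k)) * ((2 * k).choose k)

/-!
Over any commutative ring, `Pf (S * B * Sᵀ) = det S * Pf B` for alternating `B`: expanding the left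
side row by row gives a sum over maps `f` of `∏ j, S j (f j)` times the Pfaffian of
`B.submatrix f f`, which is `sign f * Pf B` if `f` is a permutation, and vanishes otherwise because
two rows agree.

Let `T i l` be the coefficient of `z ^ l` in `x ^ i`, where `x = z + 1 + z⁻¹`, and let `CT` take the
constant term, so that `M_n = CT (x ^ n * (1 - z ^ 2))`. Applying `z ∂/∂z` to `x ^ (n + 1)` gives
`(l + 1) * T (n + 1) (l + 1) = (n + 1) * P n l` with `P n l = T n l - T n (l + 2)`, and the
three-term recurrence of `P` gives the orthogonality relation `∑ l, P i l * P j l = M_(i + j)`.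
Together they yield, after summation by parts,
`(j - i) * M_(i + j - 1) = ∑ l, (2 * l + 1) * (T i l * T j (l + 1) - T j l * T i (l + 1))`.
So the matrix of the theorem is `T * (U - Uᵀ) * Tᵀ` with `T` unitriangular and `U` carrying the
numbers `1, 3, 5, …` just above the diagonal. Only the standard matching `{0, 1}, {2, 3}, …`
contributes to the Pfaffian of `U - Uᵀ`, so that every second superdiagonal entry `4 * k + 1`
survives.
-/

open Equiv Finset
open scoped Matrix

section Alternating

variable {m n R : Type*} [AddGroup R]

/-- A square matrix that is skew-symmetric with zero diagonal; the second condition is automatic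
only when `2` is not a zero divisor. -/
structure IsAlternating (A : Matrix n n R) : Prop where
  apply_symm : ∀ i j, A j i = -A i j
  apply_self : ∀ i, A i i = 0

lemma IsAlternating.submatrix {A : Matrix n n R} (hA : IsAlternating A) (f : m → n) :
    IsAlternating (A.submatrix f f) :=
  ⟨fun i j => hA.apply_symm (f i) (f j), fun i => hA.apply_self (f i)⟩

lemma isAlternating_sub_transpose (A : Matrix n n R) : IsAlternating (A - Aᵀ) :=
  ⟨fun i j => by simp, fun i => by simp⟩

end Alternating

section Matchings

variable {N : ℕ}

/-- The bijection `(i, b) ↦ 2 * i + b` between the elements of the blocks `{2i, 2i + 1}` of the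
standard perfect matching and `Fin (2 * N)`. -/
def slot : Fin N × Fin 2 ≃ Fin (2 * N) :=
  finProdFinEquiv.trans (finCongr (mul_comm N 2))

lemma slot_zero (i : Fin N) : slot (i, 0) = ⟨2 * i, by lia⟩ := by
  ext; simp [slot]

lemma slot_one (i : Fin N) : slot (i, 1) = ⟨2 * i + 1, by lia⟩ := by
  ext; simp [slot, add_comm]

lemma eq_one_or_eq_swap_of_perm_fin_two (e : Perm (Fin 2)) : e = 1 ∨ e = swap 0 1 := by
  revert e; decide

/-- The permutation of `Fin (2 * N)` that moves the block `i` of the standard perfect matching to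
the block `τ i`, permuting its two elements by `e i`. -/
def blockPerm (τ : Perm (Fin N)) (e : Fin N → Perm (Fin 2)) : Perm (Fin (2 * N)) :=
  slot.permCongr ((prodCongrRight e).trans (prodCongrLeft fun _ => τ))

lemma blockPerm_slot (τ : Perm (Fin N)) (e : Fin N → Perm (Fin 2)) (i : Fin N) (b : Fin 2) :
    blockPerm τ e (slot (i, b)) = slot (τ i, e i b) := by
  simp [blockPerm, permCongr_apply]

lemma sign_blockPerm (τ : Perm (Fin N)) (e : Fin N → Perm (Fin 2)) :
    Perm.sign (blockPerm τ e) = ∏ i, Perm.sign (e i) := by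
  simp [blockPerm, Perm.sign_permCongr, Perm.sign_trans, Perm.sign_prodCongrRight,
    Perm.sign_prodCongrLeft]

lemma eq_blockPerm {h : Perm (Fin (2 * N))} {τ : Perm (Fin N)} {e : Fin N → Perm (Fin 2)}
    (H : ∀ i b, h (slot (i, b)) = slot (τ i, e i b)) : h = blockPerm τ e := by
  refine Equiv.ext fun x => ?_
  obtain ⟨⟨i, b⟩, rfl⟩ := slot.surjective x
  rw [H, blockPerm_slot]

/-- The stabilizer of the standard perfect matching `{0, 1}, {2, 3}, …` of `Fin (2 * N)`. Its left
cosets are the perfect matchings of `Fin (2 * N)`: the coset of `σ` is the matching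
`{σ 0, σ 1}, {σ 2, σ 3}, …`. -/
def matchingStabilizer (N : ℕ) : Subgroup (Perm (Fin (2 * N))) where
  carrier := {h | ∃ τ e, h = blockPerm τ e}
  one_mem' := ⟨1, 1, eq_blockPerm fun _ _ => rfl⟩
  mul_mem' := by
    rintro _ _ ⟨τ, e, rfl⟩ ⟨τ', e', rfl⟩
    exact ⟨τ * τ', fun i => e (τ' i) * e' i, eq_blockPerm fun i b => by simp [blockPerm_slot]⟩
  inv_mem' := by
    rintro _ ⟨τ, e, rfl⟩
    exact ⟨τ⁻¹, fun i => (e (τ⁻¹ i))⁻¹, eq_blockPerm fun i b => by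
      rw [Perm.inv_eq_iff_eq, blockPerm_slot]
      simp⟩

lemma fst_slot_symm_eq_of_swap_mem {u v : Fin (2 * N)} (h : swap u v ∈ matchingStabilizer N) :
    (slot.symm u).1 = (slot.symm v).1 := by
  obtain ⟨τ, e, h⟩ := h
  obtain ⟨⟨i, b⟩, rfl⟩ := slot.surjective u
  obtain ⟨⟨j, c⟩, rfl⟩ := slot.surjective v
  simp only [symm_apply_apply]
  by_contra hij
  have image_eq (d : Fin 2) :
      swap (slot (i, b)) (slot (j, c)) (slot (i, d)) = slot (τ i, e i d) := by
    rw [h, blockPerm_slot]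
  have moved : τ i = j := by
    have := image_eq b
    rw [swap_apply_left, slot.apply_eq_iff_eq, Prod.mk.injEq] at this
    exact this.1.symm
  have fixed : τ i = i := by
    obtain ⟨d, hd⟩ := exists_ne b
    have := image_eq d
    rw [swap_apply_of_ne_of_ne (by simp [hd]) (by simp [hij]), slot.apply_eq_iff_eq,
      Prod.mk.injEq] at this
    exact this.1.symm
  exact hij (fixed.symm.trans moved)

/-- The permutations representing perfect matchings in the definition of `pfaffian`. -/
def IsStandard (σ : Perm (Fin (2 * N))) : Prop :=
  (∀ i : Fin N, σ (slot (i, 0)) < σ (slot (i, 1))) ∧ StrictMono fun i : Fin N => σ (slot (i, 0))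

lemma isStandard_one : IsStandard (1 : Perm (Fin (2 * N))) := by
  refine ⟨fun i => ?_, fun i j hij => ?_⟩ <;>
    simp only [Perm.one_apply, slot_zero, slot_one, Fin.lt_def] at * <;> lia

lemma exists_mul_isStandard (σ : Perm (Fin (2 * N))) :
    ∃ h ∈ matchingStabilizer N, IsStandard (σ * h) := by
  have orient (i : Fin N) : ∃ e : Perm (Fin 2), σ (slot (i, e 0)) < σ (slot (i, e 1)) := by
    rcases lt_or_gt_of_ne (a := σ (slot (i, 0))) (b := σ (slot (i, 1))) (by simp) with hlt | hgt
    · exact ⟨1, hlt⟩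
    · exact ⟨swap 0 1, by simpa using hgt⟩
  choose e he using orient
  let g (i : Fin N) : Fin (2 * N) := σ (slot (i, e i 0))
  have hg : Function.Injective g := fun i j hij =>
    congrArg Prod.fst (slot.injective (σ.injective hij))
  refine ⟨blockPerm (Tuple.sort g) (fun i => e (Tuple.sort g i)), ⟨_, _, rfl⟩, fun i => ?_, ?_⟩
  · simpa only [Perm.mul_apply, blockPerm_slot] using he (Tuple.sort g i)
  · simp only [Perm.mul_apply, blockPerm_slot]
    exact (Tuple.monotone_sort g).strictMono_of_injective (hg.comp (Tuple.sort g).injective)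

lemma IsStandard.eq_one_of_isStandard_mul {σ h : Perm (Fin (2 * N))} (hσ : IsStandard σ)
    (hh : h ∈ matchingStabilizer N) (hσh : IsStandard (σ * h)) : h = 1 := by
  obtain ⟨τ, e, rfl⟩ := hh
  simp only [IsStandard, Perm.mul_apply, blockPerm_slot] at hσh
  have he (i : Fin N) : e i = 1 := by
    refine (eq_one_or_eq_swap_of_perm_fin_two (e i)).resolve_right fun hswap => ?_
    have := hσh.1 i
    rw [hswap, swap_apply_left, swap_apply_right] at this
    exact this.asymm (hσ.1 _)
  have hτ : StrictMono τ := fun i j hij => by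
    simpa [he, hσ.2.lt_iff_lt] using hσh.2 hij
  exact (eq_blockPerm fun i b => by simp [he, hτ.eq_id]).symm

end Matchings

section Pfaffian

variable {N : ℕ} {R : Type*} [CommRing R]

/-- The contribution to the Pfaffian of the perfect matching represented by `σ`. -/
def pfaffianTerm (A : Matrix (Fin (2 * N)) (Fin (2 * N)) R) (σ : Perm (Fin (2 * N))) : R :=
  (Perm.sign σ : ℤ) • ∏ i : Fin N, A (σ (slot (i, 0))) (σ (slot (i, 1)))

open scoped Classical in
lemma pfaffian_eq_sum_isStandard (A : Matrix (Fin (2 * N)) (Fin (2 * N)) R) :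
    pfaffian A = ∑ σ with IsStandard σ, pfaffianTerm A σ := by
  simp only [pfaffian, IsStandard, pfaffianTerm, StrictMono, slot_zero, slot_one]

lemma pfaffianTerm_mul_left (A : Matrix (Fin (2 * N)) (Fin (2 * N)) R)
    (τ σ : Perm (Fin (2 * N))) :
    pfaffianTerm A (τ * σ) = (Perm.sign τ : ℤ) • pfaffianTerm (A.submatrix τ τ) σ := by
  simp [pfaffianTerm, mul_assoc]

lemma IsAlternating.pfaffianTerm_mul_right {A : Matrix (Fin (2 * N)) (Fin (2 * N)) R}
    (hA : IsAlternating A) (σ : Perm (Fin (2 * N))) {h : Perm (Fin (2 * N))}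
    (hh : h ∈ matchingStabilizer N) : pfaffianTerm A (σ * h) = pfaffianTerm A σ := by
  obtain ⟨τ, e, rfl⟩ := hh
  let a (i : Fin N) : R := A (σ (slot (i, 0))) (σ (slot (i, 1)))
  have flip (i : Fin N) : A (σ (slot (τ i, e i 0))) (σ (slot (τ i, e i 1))) =
      (Perm.sign (e i) : ℤ) * a (τ i) := by
    rcases eq_one_or_eq_swap_of_perm_fin_two (e i) with he | he
    · simp [he, a]
    · simp [he, a, hA.apply_symm (σ (slot (τ i, 0)))]
  have sign_sq : (∏ i, ((Perm.sign (e i) : ℤ) : R)) * ∏ i, ((Perm.sign (e i) : ℤ) : R) = 1 := by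
    rw [← prod_mul_distrib]
    exact prod_eq_one fun i _ => by
      rw [← Int.cast_mul, ← Units.val_mul, Int.units_mul_self, Units.val_one, Int.cast_one]
  calc pfaffianTerm A (σ * blockPerm τ e)
    _ = (Perm.sign σ : ℤ) * (∏ i, ((Perm.sign (e i) : ℤ) : R)) *
          ((∏ i, ((Perm.sign (e i) : ℤ) : R)) * ∏ i, a (τ i)) := by
      simp [pfaffianTerm, blockPerm_slot, sign_blockPerm, flip, prod_mul_distrib, zsmul_eq_mul]
    _ = (Perm.sign σ : ℤ) * ∏ i, a (τ i) := by linear_combination (_ * ∏ i, a (τ i)) * sign_sq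
    _ = pfaffianTerm A σ := by rw [Equiv.prod_comp τ a, pfaffianTerm, zsmul_eq_mul]

lemma IsAlternating.pfaffianTerm_out {A : Matrix (Fin (2 * N)) (Fin (2 * N)) R}
    (hA : IsAlternating A) (σ : Perm (Fin (2 * N))) :
    pfaffianTerm A (σ : Perm (Fin (2 * N)) ⧸ matchingStabilizer N).out = pfaffianTerm A σ := by
  obtain ⟨h, hout⟩ := QuotientGroup.mk_out_eq_mul (matchingStabilizer N) σ
  rw [hout, hA.pfaffianTerm_mul_right σ h.2]

open scoped Classical in
lemma IsAlternating.pfaffian_eq_sum_quotient {A : Matrix (Fin (2 * N)) (Fin (2 * N)) R}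
    (hA : IsAlternating A) :
    pfaffian A = ∑ q : Perm (Fin (2 * N)) ⧸ matchingStabilizer N, pfaffianTerm A q.out := by
  rw [pfaffian_eq_sum_isStandard]
  refine sum_bij (fun σ _ => (σ : Perm (Fin (2 * N)) ⧸ matchingStabilizer N))
    (fun _ _ => mem_univ _) (fun σ hσ τ hτ hστ => ?_) (fun q _ => ?_)
    fun σ _ => (hA.pfaffianTerm_out σ).symm
  · rw [mem_filter_univ] at hσ hτ
    have := hσ.eq_one_of_isStandard_mul (QuotientGroup.eq.1 hστ) (by rwa [mul_inv_cancel_left])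
    exact inv_mul_eq_one.1 this
  · induction q using QuotientGroup.induction_on with
    | H σ =>
      obtain ⟨h, hh, hσh⟩ := exists_mul_isStandard σ
      exact ⟨σ * h, by simpa using hσh, QuotientGroup.mk_mul_of_mem σ hh⟩

lemma IsAlternating.pfaffianTerm_smul_out {A : Matrix (Fin (2 * N)) (Fin (2 * N)) R}
    (hA : IsAlternating A) (τ : Perm (Fin (2 * N)))
    (q : Perm (Fin (2 * N)) ⧸ matchingStabilizer N) :
    pfaffianTerm A (τ • q).out =
      (Perm.sign τ : ℤ) • pfaffianTerm (A.submatrix τ τ) q.out := by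
  have hq : ((τ * q.out :) : Perm (Fin (2 * N)) ⧸ matchingStabilizer N) = τ • q :=
    MulAction.Quotient.coe_smul_out (H := matchingStabilizer N) τ q
  rw [← pfaffianTerm_mul_left, ← hq, hA.pfaffianTerm_out]

theorem IsAlternating.pfaffian_submatrix_perm {A : Matrix (Fin (2 * N)) (Fin (2 * N)) R}
    (hA : IsAlternating A) (τ : Perm (Fin (2 * N))) :
    pfaffian (A.submatrix τ τ) = (Perm.sign τ : ℤ) • pfaffian A := by
  classical
  have hterm (q : Perm (Fin (2 * N)) ⧸ matchingStabilizer N) :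
      pfaffianTerm (A.submatrix τ τ) q.out = (Perm.sign τ : ℤ) • pfaffianTerm A (τ • q).out := by
    rw [hA.pfaffianTerm_smul_out, smul_smul, ← Units.val_mul, Int.units_mul_self, Units.val_one,
      one_smul]
  rw [(hA.submatrix τ).pfaffian_eq_sum_quotient, hA.pfaffian_eq_sum_quotient, smul_sum]
  exact (sum_congr rfl fun q _ => hterm q).trans <| Equiv.sum_comp (MulAction.toPerm τ)
    fun q : Perm (Fin (2 * N)) ⧸ matchingStabilizer N => (Perm.sign τ : ℤ) • pfaffianTerm A q.out

lemma IsAlternating.pfaffianTerm_eq_zero_of_swap_mem {A : Matrix (Fin (2 * N)) (Fin (2 * N)) R}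
    (hA : IsAlternating A) {σ : Perm (Fin (2 * N))} {u v : Fin (2 * N)} (huv : u ≠ v)
    (hmem : swap u v ∈ matchingStabilizer N) (h : A (σ u) (σ v) = 0) : pfaffianTerm A σ = 0 := by
  have hblock := fst_slot_symm_eq_of_swap_mem hmem
  obtain ⟨⟨i, b⟩, rfl⟩ := slot.surjective u
  obtain ⟨⟨j, c⟩, rfl⟩ := slot.surjective v
  obtain rfl : i = j := by simpa using hblock
  have hfactor : A (σ (slot (i, 0))) (σ (slot (i, 1))) = 0 := by
    fin_cases b <;> fin_cases c
    · exact absurd rfl huv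
    · exact h
    · rw [hA.apply_symm, neg_eq_zero]
      exact h
    · exact absurd rfl huv
  rw [pfaffianTerm, prod_eq_zero (mem_univ i) hfactor, smul_zero]

theorem IsAlternating.pfaffian_eq_zero_of_row_eq {A : Matrix (Fin (2 * N)) (Fin (2 * N)) R}
    (hA : IsAlternating A) {a b : Fin (2 * N)} (hab : a ≠ b) (hrow : A a = A b) :
    pfaffian A = 0 := by
  classical
  have apply_swap_left (x y : Fin (2 * N)) : A (swap a b x) y = A x y := by
    rw [swap_apply_def]; split_ifs with hx hx <;> simp [hx, hrow]
  have hswap : A.submatrix (swap a b) (swap a b) = A := by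
    ext x y
    rw [Matrix.submatrix_apply, apply_swap_left, hA.apply_symm, apply_swap_left,
      ← hA.apply_symm]
  rw [hA.pfaffian_eq_sum_quotient]
  refine sum_ninvolution (swap a b • ·) (fun q => ?_) (fun q hne hfix => hne ?_)
    (fun _ => mem_univ _) fun q => by rw [smul_smul, swap_mul_self, one_smul]
  · rw [hA.pfaffianTerm_smul_out, hswap, Perm.sign_swap hab]
    simp
  · -- A matching fixed by the swap contains the block `{a, b}`, and `A a b = 0`.
    have hmem : swap (q.out⁻¹ a) (q.out⁻¹ b) ∈ matchingStabilizer N := by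
      rw [swap_apply_apply, inv_inv, mul_assoc, ← QuotientGroup.eq, ← smul_eq_mul (swap a b),
        MulAction.Quotient.coe_smul_out, hfix]
      exact QuotientGroup.out_eq' q
    refine hA.pfaffianTerm_eq_zero_of_swap_mem (by simpa using hab) hmem ?_
    simp [hrow, hA.apply_self]

lemma prod_mul_mul_transpose_apply {m : Type*} [Fintype m] (S : Matrix (Fin (2 * N)) m R)
    (B : Matrix m m R) (σ : Perm (Fin (2 * N))) :
    ∏ i : Fin N, (S * B * Sᵀ) (σ (slot (i, 0))) (σ (slot (i, 1))) =
      ∑ f : Fin (2 * N) → m,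
        (∏ j, S j (f j)) * ∏ i : Fin N, B (f (σ (slot (i, 0)))) (f (σ (slot (i, 1)))) := by
  classical
  have entry (a b : Fin (2 * N)) : (S * B * Sᵀ) a b =
      ∑ p : Fin 2 → m, S a (p 0) * S b (p 1) * B (p 0) (p 1) := by
    rw [← (finTwoArrowEquiv m).symm.sum_comp, Fintype.sum_prod_type, sum_comm]
    simp only [Matrix.mul_apply, sum_mul, Matrix.transpose_apply]
    exact sum_congr rfl fun _ _ => sum_congr rfl fun _ _ => by
      simp only [finTwoArrowEquiv_symm_apply, Matrix.cons_val_zero, Matrix.cons_val_one]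
      ring
  let e : (Fin (2 * N) → m) ≃ (Fin N → Fin 2 → m) :=
    ((slot.trans σ).symm.arrowCongr (Equiv.refl m)).trans (Equiv.curry _ _ _)
  have he (f : Fin (2 * N) → m) (i : Fin N) (b : Fin 2) : e f i b = f (σ (slot (i, b))) := rfl
  simp only [entry]
  rw [Fintype.prod_sum, ← e.sum_comp]
  refine sum_congr rfl fun f _ => ?_
  rw [prod_mul_distrib, ← (slot.trans σ).prod_comp fun j => S j (f j), Fintype.prod_prod_type]
  simp [he, Fin.prod_univ_two]

lemma pfaffian_mul_mul_transpose_eq_sum {m : Type*} [Fintype m] (S : Matrix (Fin (2 * N)) m R)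
    (B : Matrix m m R) :
    pfaffian (S * B * Sᵀ) =
      ∑ f : Fin (2 * N) → m, (∏ j, S j (f j)) * pfaffian (B.submatrix f f) := by
  classical
  simp only [pfaffian_eq_sum_isStandard, pfaffianTerm, prod_mul_mul_transpose_apply, smul_sum,
    mul_sum, Matrix.submatrix_apply, mul_smul_comm]
  exact sum_comm

theorem IsAlternating.pfaffian_mul_mul_transpose {B : Matrix (Fin (2 * N)) (Fin (2 * N)) R}
    (hB : IsAlternating B) (S : Matrix (Fin (2 * N)) (Fin (2 * N)) R) :
    pfaffian (S * B * Sᵀ) = S.det * pfaffian B := by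
  classical
  rw [pfaffian_mul_mul_transpose_eq_sum, ← Matrix.det_transpose, Matrix.det_apply, sum_mul]
  symm
  refine sum_of_injOn (fun τ : Perm (Fin (2 * N)) => (τ : Fin (2 * N) → Fin (2 * N)))
    DFunLike.coe_injective.injOn (fun _ _ => mem_univ _) (fun f _ hf => ?_) fun τ _ => ?_
  · have hinj : ¬ Function.Injective f := fun hinj =>
      hf ⟨Equiv.ofBijective f (Finite.injective_iff_bijective.1 hinj), by simp, rfl⟩
    obtain ⟨a, b, hfab, hab⟩ := Function.not_injective_iff.1 hinj
    rw [(hB.submatrix f).pfaffian_eq_zero_of_row_eq hab (by ext; simp [hfab]), mul_zero]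
  · rw [hB.pfaffian_submatrix_perm, mul_smul_comm, ← smul_mul_assoc]
    rfl

lemma strictMono_of_slot {α : Type*} [Preorder α] {f : Fin (2 * N) → α}
    (hblock : ∀ i, f (slot (i, 0)) < f (slot (i, 1)))
    (hnext : ∀ i j, i < j → f (slot (i, 1)) < f (slot (j, 0))) : StrictMono f := by
  have left_le (i : Fin N) (b : Fin 2) : f (slot (i, 0)) ≤ f (slot (i, b)) := by
    fin_cases b
    exacts [le_rfl, (hblock i).le]
  have le_right (i : Fin N) (b : Fin 2) : f (slot (i, b)) ≤ f (slot (i, 1)) := by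
    fin_cases b
    exacts [(hblock i).le, le_rfl]
  intro x y hxy
  obtain ⟨⟨i, b⟩, rfl⟩ := slot.surjective x
  obtain ⟨⟨j, c⟩, rfl⟩ := slot.surjective y
  rcases lt_trichotomy i j with hij | rfl | hji
  · exact (le_right i b).trans_lt ((hnext i j hij).trans_le (left_le j c))
  · fin_cases b <;> fin_cases c <;> simp_all [slot_zero, slot_one]
  · rw [Fin.lt_def] at hxy hji
    fin_cases b <;> fin_cases c <;>
      simp only [Fin.zero_eta, Fin.mk_one, slot_zero, slot_one] at hxy <;> lia

theorem pfaffian_eq_prod_of_apply_eq_zero {A : Matrix (Fin (2 * N)) (Fin (2 * N)) R}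
    (hA : ∀ i j : Fin (2 * N), (i : ℕ) + 1 < j → A i j = 0) :
    pfaffian A = ∏ i : Fin N, A (slot (i, 0)) (slot (i, 1)) := by
  classical
  rw [pfaffian_eq_sum_isStandard, sum_eq_single_of_mem 1 (by simpa using isStandard_one)]
  · simp [pfaffianTerm]
  intro σ hσ hne
  rw [mem_filter_univ] at hσ
  by_contra hterm
  have adjacent (i : Fin N) : (σ (slot (i, 1)) : ℕ) = σ (slot (i, 0)) + 1 := by
    by_contra hgap
    have hlt : (σ (slot (i, 0)) : ℕ) < σ (slot (i, 1)) := hσ.1 i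
    have hzero := hA (σ (slot (i, 0))) (σ (slot (i, 1))) (by lia)
    exact hterm (by rw [pfaffianTerm, prod_eq_zero (mem_univ i) hzero, smul_zero])
  have hmono : StrictMono σ := by
    refine strictMono_of_slot hσ.1 fun i j hij => lt_of_le_of_ne ?_ (by simp)
    have hlt : (σ (slot (i, 0)) : ℕ) < σ (slot (j, 0)) := hσ.2 hij
    rw [Fin.le_def, adjacent]
    exact hlt
  exact hne (DFunLike.coe_injective hmono.eq_id)

end Pfaffian

section Trinomial

/-- The coefficient of `z ^ l` in `(z + 1 + z⁻¹) ^ n`, summed over the number `k` of factors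
contributing `z⁻¹`. -/
def trinomial (n l : ℕ) : ℕ :=
  ∑ k ∈ range (n + 1), n.choose (2 * k + l) * (2 * k + l).choose k

lemma trinomial_eq_sum_range {n K : ℕ} (l : ℕ) (h : n < K) :
    trinomial n l = ∑ k ∈ range K, n.choose (2 * k + l) * (2 * k + l).choose k := by
  refine sum_subset (range_subset_range.2 h) fun k _ hk => ?_
  rw [mem_range, not_lt] at hk
  rw [Nat.choose_eq_zero_of_lt (by lia), zero_mul]

lemma trinomial_eq_zero_of_lt {n l : ℕ} (h : n < l) : trinomial n l = 0 :=
  sum_eq_zero fun k _ => by rw [Nat.choose_eq_zero_of_lt (by lia), zero_mul]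

lemma trinomial_self (n : ℕ) : trinomial n n = 1 := by
  rw [trinomial, sum_range_succ', sum_eq_zero fun k _ => ?_]
  · simp
  · rw [Nat.choose_eq_zero_of_lt (by lia), zero_mul]

lemma trinomial_succ_zero (n : ℕ) :
    trinomial (n + 1) 0 = trinomial n 0 + 2 * trinomial n 1 := by
  have pascal (k : ℕ) : (n + 1).choose (2 * (k + 1)) * (2 * (k + 1)).choose (k + 1) =
      n.choose (2 * (k + 1)) * (2 * (k + 1)).choose (k + 1) +
        2 * (n.choose (2 * k + 1) * (2 * k + 1).choose k) := by
    rw [show 2 * (k + 1) = 2 * k + 1 + 1 by ring, Nat.choose_succ_succ' n,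
      Nat.choose_succ_succ' (2 * k + 1), Nat.choose_symm_half]
    ring
  rw [trinomial_eq_sum_range 0 (Nat.lt_add_one (n + 1)),
    trinomial_eq_sum_range 0 (by lia : n < n + 2), trinomial, sum_range_succ' _ (n + 1),
    sum_range_succ' _ (n + 1)]
  simp only [add_zero, pascal, sum_add_distrib, mul_sum]
  simp only [mul_zero, Nat.choose_zero_right, Nat.choose_self, mul_one]
  ring

lemma trinomial_succ_succ (n l : ℕ) :
    trinomial (n + 1) (l + 1) = trinomial n l + trinomial n (l + 1) + trinomial n (l + 2) := by
  have pascal (k : ℕ) : (n + 1).choose (2 * k + (l + 1)) * (2 * k + (l + 1)).choose k =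
      n.choose (2 * k + l) * (2 * k + l + 1).choose k +
        n.choose (2 * k + (l + 1)) * (2 * k + (l + 1)).choose k := by
    rw [← add_assoc, Nat.choose_succ_succ']
    ring
  have pascal' (k : ℕ) : n.choose (2 * (k + 1) + l) * (2 * (k + 1) + l + 1).choose (k + 1) =
      n.choose (2 * (k + 1) + l) * (2 * (k + 1) + l).choose (k + 1) +
        n.choose (2 * k + (l + 2)) * (2 * k + (l + 2)).choose k := by
    rw [Nat.choose_succ_succ', show 2 * (k + 1) + l = 2 * k + (l + 2) by ring]
    ring
  have split : ∑ k ∈ range (n + 2), n.choose (2 * k + l) * (2 * k + l + 1).choose k =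
      trinomial n l + trinomial n (l + 2) := by
    rw [trinomial_eq_sum_range l (by lia : n < n + 2), trinomial, sum_range_succ',
      sum_range_succ' _ (n + 1)]
    simp only [pascal', sum_add_distrib]
    simp only [mul_zero, zero_add, Nat.choose_zero_right, mul_one]
    ring
  rw [trinomial]
  simp only [pascal, sum_add_distrib]
  rw [split, ← trinomial_eq_sum_range (l + 1) (by lia)]
  ring

/-- The number of Motzkin paths of length `n` from height `0` to height `l`, counted by the
reflection principle. -/
def motzkinTriangle (n l : ℕ) : ℤ := trinomial n l - trinomial n (l + 2)

lemma motzkinTriangle_eq_zero_of_lt {n l : ℕ} (h : n < l) : motzkinTriangle n l = 0 := by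
  simp [motzkinTriangle, trinomial_eq_zero_of_lt h, trinomial_eq_zero_of_lt (by lia : n < l + 2)]

lemma motzkinTriangle_succ_zero (n : ℕ) :
    motzkinTriangle (n + 1) 0 = motzkinTriangle n 0 + motzkinTriangle n 1 := by
  simp only [motzkinTriangle, trinomial_succ_zero, trinomial_succ_succ]
  push_cast
  ring

lemma motzkinTriangle_succ_succ (n l : ℕ) :
    motzkinTriangle (n + 1) (l + 1) =
      motzkinTriangle n l + motzkinTriangle n (l + 1) + motzkinTriangle n (l + 2) := by
  simp only [motzkinTriangle, trinomial_succ_succ]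
  push_cast
  ring

-- Coefficientwise form of `z ∂/∂z (x ^ (n + 1)) = (n + 1) x ^ n (z - z⁻¹)` for `x = z + 1 + z⁻¹`.
lemma succ_mul_trinomial_succ_succ (n l : ℕ) :
    ((l : ℤ) + 1) * trinomial (n + 1) (l + 1) = (n + 1) * motzkinTriangle n l := by
  induction n generalizing l with
  | zero =>
    cases l with
    | zero => simp [motzkinTriangle, trinomial_self, trinomial_eq_zero_of_lt]
    | succ l =>
      simp [motzkinTriangle_eq_zero_of_lt, trinomial_eq_zero_of_lt]
  | succ n ih =>
    rw [trinomial_succ_succ]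
    cases l with
    | zero =>
      have h₀ := ih 0
      have h₁ := ih 1
      have hP : motzkinTriangle (n + 1) 0 = trinomial (n + 1) 0 - trinomial (n + 1) 2 := rfl
      simp only [motzkinTriangle_succ_zero, trinomial_succ_zero] at *
      push_cast [motzkinTriangle] at *
      linarith
    | succ l =>
      have h₀ := ih l
      have h₁ := ih (l + 1)
      have h₂ := ih (l + 2)
      have hP : motzkinTriangle (n + 1) (l + 1) =
        trinomial (n + 1) (l + 1) - trinomial (n + 1) (l + 3) := rfl
      rw [motzkinTriangle_succ_succ] at hP ⊢
      push_cast at *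
      linear_combination h₀ + h₁ + h₂ - hP

lemma motzkinTriangle_zero_right (n : ℕ) : (motzkinTriangle n 0 : ℚ) = motzkin n := by
  have hterm (k : ℕ) : ((n + 1).choose (2 * k + 1) * (2 * k + 1).choose k : ℚ) =
      (n + 1) * (1 / (k + 1) * n.choose (2 * k) * (2 * k).choose k) := by
    have hn : ((n : ℚ) + 1) * n.choose (2 * k) = (n + 1).choose (2 * k + 1) * (2 * k + 1) := by
      exact_mod_cast Nat.add_one_mul_choose_eq n (2 * k)
    have hk : (2 * (k : ℚ) + 1) * (2 * k).choose k = (2 * k + 1).choose k * (k + 1) := by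
      rw [← Nat.choose_symm_half]
      exact_mod_cast Nat.add_one_mul_choose_eq (2 * k) k
    field_simp
    linear_combination (-(2 * k).choose k : ℚ) * hn - ((n + 1).choose (2 * k + 1) : ℚ) * hk
  have htrinomial : (trinomial (n + 1) 1 : ℚ) = (n + 1) * motzkin n := by
    have hzero : n.choose (2 * (n + 1)) = 0 := Nat.choose_eq_zero_of_lt (by lia)
    rw [trinomial, motzkin, mul_sum]
    push_cast
    simp only [hterm]
    rw [sum_range_succ]
    simp [hzero]
  have hderiv : (trinomial (n + 1) 1 : ℚ) = (n + 1) * motzkinTriangle n 0 := by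
    exact_mod_cast (by simpa using succ_mul_trinomial_succ_succ n 0)
  exact mul_left_cancel₀ (by positivity : (n : ℚ) + 1 ≠ 0) (hderiv.symm.trans htrinomial)

-- The truncated Jacobi matrix of the recurrence is symmetric up to this boundary term.
lemma sum_motzkinTriangle_succ_mul_sub (i j K : ℕ) :
    ∑ l ∈ range (K + 1), (motzkinTriangle (i + 1) l * motzkinTriangle j l -
        motzkinTriangle i l * motzkinTriangle (j + 1) l) =
      motzkinTriangle i (K + 1) * motzkinTriangle j K -
        motzkinTriangle i K * motzkinTriangle j (K + 1) := by
  induction K with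
  | zero =>
    simp only [zero_add, sum_range_one, motzkinTriangle_succ_zero]
    ring
  | succ K ih =>
    rw [sum_range_succ, ih, motzkinTriangle_succ_succ, motzkinTriangle_succ_succ]
    ring

lemma sum_motzkinTriangle_mul {i K : ℕ} (hi : i < K) (j : ℕ) :
    ∑ l ∈ range K, motzkinTriangle i l * motzkinTriangle j l = motzkinTriangle (i + j) 0 := by
  induction i generalizing j with
  | zero =>
    rw [sum_eq_single_of_mem 0 (mem_range.2 hi)]
    · simp [motzkinTriangle, trinomial]
    · intro l _ hl
      rw [motzkinTriangle_eq_zero_of_lt (by lia), zero_mul]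
  | succ i ih =>
    obtain ⟨K, rfl⟩ := Nat.exists_eq_add_one_of_ne_zero hi.ne_bot
    have hshift := sum_motzkinTriangle_succ_mul_sub i j K
    rw [motzkinTriangle_eq_zero_of_lt (by lia : i < K), motzkinTriangle_eq_zero_of_lt
      (by lia : i < K + 1), sum_sub_distrib, ih (by lia), zero_mul, zero_mul, sub_zero] at hshift
    rw [sub_eq_zero.1 hshift, add_right_comm, add_assoc]

lemma sum_succ_mul_trinomial_mul_motzkinTriangle {i K : ℕ} (hi : i < K) (j : ℕ) :
    ∑ l ∈ range K, ((l : ℤ) + 1) * trinomial j (l + 1) * motzkinTriangle i l =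
      j * motzkinTriangle (i + j - 1) 0 := by
  cases j with
  | zero => simp [trinomial_eq_zero_of_lt]
  | succ j =>
    rw [← add_assoc, Nat.add_sub_cancel, ← sum_motzkinTriangle_mul hi, mul_sum]
    refine sum_congr rfl fun l _ => ?_
    rw [succ_mul_trinomial_succ_succ]
    push_cast
    ring

lemma sum_trinomial_wronskian {i j K : ℕ} (hi : i < K) (hj : j < K) :
    ∑ l ∈ range K, (2 * (l : ℤ) + 1) *
        (trinomial i l * trinomial j (l + 1) - trinomial j l * trinomial i (l + 1)) =
      ((j : ℤ) - i) * motzkinTriangle (i + j - 1) 0 := by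
  let W (l : ℕ) : ℤ := trinomial i l * trinomial j (l + 1) - trinomial j l * trinomial i (l + 1)
  have hW : W K = 0 := by simp [W, trinomial_eq_zero_of_lt hi, trinomial_eq_zero_of_lt hj]
  have htelescope : ∑ l ∈ range K, (((l + 1 : ℕ) : ℤ) * W (l + 1) - l * W l) = 0 := by
    rw [sum_range_sub fun l => (l : ℤ) * W l, hW]
    simp
  have hsymm := sum_succ_mul_trinomial_mul_motzkinTriangle hj i
  rw [add_comm j i] at hsymm
  rw [sub_mul, ← sum_succ_mul_trinomial_mul_motzkinTriangle hi j, ← hsymm,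
    ← add_zero (∑ l ∈ range K, _), ← htelescope, ← sum_sub_distrib, ← sum_add_distrib]
  refine sum_congr rfl fun l _ => ?_
  simp only [W, motzkinTriangle]
  push_cast
  ring

end Trinomial

section Factorization

/-- The `n × n` matrix with entries `c 0, c 1, …` just above the diagonal and zeros elsewhere. -/
def superdiagonal {R : Type*} [Zero R] (n : ℕ) (c : ℕ → R) : Matrix (Fin n) (Fin n) R :=
  Matrix.of fun l m => if (m : ℕ) = l + 1 then c l else 0

lemma mul_superdiagonal_mul_transpose_apply {R : Type*} [CommRing R] {n : ℕ} (c : ℕ → R)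
    {s : ℕ → ℕ → R} (hs : ∀ i < n, s i n = 0) (i j : Fin n) :
    let S : Matrix (Fin n) (Fin n) R := Matrix.of fun i l => s i l
    (S * superdiagonal n c * Sᵀ) i j =
      ∑ l ∈ range n, c l * (s i l * s j (l + 1)) := by
  intro S
  have hrow (l : Fin n) : (superdiagonal n c * Sᵀ) l j = c l * s j (l + 1) := by
    simp only [Matrix.mul_apply, superdiagonal, S, Matrix.of_apply, Matrix.transpose_apply, ite_mul,
      zero_mul]
    rw [Fin.sum_univ_eq_sum_range fun m => if m = (l : ℕ) + 1 then c l * s j m else 0, sum_ite_eq',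
      ite_eq_left_iff, mem_range]
    intro hl
    rw [show (l : ℕ) + 1 = n by lia, hs j j.isLt, mul_zero]
  rw [Matrix.mul_assoc, Matrix.mul_apply, ← Fin.sum_univ_eq_sum_range]
  refine sum_congr rfl fun l _ => ?_
  simp only [hrow, S, Matrix.of_apply]
  ring

theorem pfaffian_superdiagonal_sub_transpose {R : Type*} [CommRing R] (N : ℕ) (c : ℕ → R) :
    pfaffian (N := N) (superdiagonal _ c - (superdiagonal _ c)ᵀ) =
      ∏ k ∈ range N, c (2 * k) := by
  rw [pfaffian_eq_prod_of_apply_eq_zero, ← Fin.prod_univ_eq_prod_range fun k => c (2 * k)]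
  · refine prod_congr rfl fun i _ => ?_
    simp [superdiagonal, slot_zero, slot_one, add_assoc]
  · intro i j hij
    simp [superdiagonal, show (j : ℕ) ≠ i + 1 by lia, show (i : ℕ) ≠ j + 1 by lia]

/-- The triangular array of trinomial coefficients, a unitriangular matrix. -/
def trinomialMatrix (n : ℕ) : Matrix (Fin n) (Fin n) ℚ :=
  Matrix.of fun i l => (trinomial i l : ℚ)

lemma det_trinomialMatrix (n : ℕ) : (trinomialMatrix n).det = 1 := by
  rw [Matrix.det_of_isLowerTriangular]
  · simp [trinomialMatrix, trinomial_self]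
  · intro i l hil
    have hlt : i < l := hil
    simp [trinomialMatrix, trinomial_eq_zero_of_lt hlt]

theorem motzkin_matrix_eq_mul_mul_transpose (n : ℕ) :
    (Matrix.of fun i j : Fin n => ((j.val : ℚ) - i.val) * motzkin (i.val + j.val - 1)) =
      trinomialMatrix n *
        (superdiagonal n (fun l => 2 * (l : ℚ) + 1) -
          (superdiagonal n (fun l => 2 * (l : ℚ) + 1))ᵀ) *
        (trinomialMatrix n)ᵀ := by
  set c : ℕ → ℚ := fun l => 2 * l + 1
  set T := trinomialMatrix n
  have hT (i j : Fin n) : (T * superdiagonal n c * Tᵀ) i j =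
      ∑ l ∈ range n, c l * (trinomial i l * trinomial j (l + 1)) :=
    mul_superdiagonal_mul_transpose_apply (s := fun i l => (trinomial i l : ℚ)) c
      (fun i hi => by simp [trinomial_eq_zero_of_lt hi]) i j
  have hsub : T * (superdiagonal n c - (superdiagonal n c)ᵀ) * Tᵀ =
      T * superdiagonal n c * Tᵀ - (T * superdiagonal n c * Tᵀ)ᵀ := by
    simp [Matrix.mul_sub, Matrix.sub_mul, Matrix.mul_assoc]
  ext i j
  rw [hsub, Matrix.sub_apply, Matrix.transpose_apply, hT, hT, ← sum_sub_distrib, Matrix.of_apply,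
    ← motzkinTriangle_zero_right]
  simp only [← mul_sub, c]
  exact_mod_cast (sum_trinomial_wronskian i.isLt j.isLt).symm

end Factorization

/-- For every positive integer `n`, the Pfaffian of the `2n × 2n` skew-symmetric
matrix with entries `(j-i)·M_{i+j-3}` (1-based; here 0-based, so the entry at
`(i,j)` is `(j-i)·M_{i+j-1}`, the `(0,0)` entry being `0`) equals
`∏_{k=0}^{n-1} (4k+1)`. -/
theorem pfaffian_motzkin (n : ℕ) (hn : 1 ≤ n) :
    pfaffian (N := n) (Matrix.of fun i j : Fin (2 * n) =>
        ((j.val : ℚ) - (i.val : ℚ)) * motzkin (i.val + j.val - 1)) =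
      ∏ k ∈ Finset.range n, (4 * (k : ℚ) + 1) := by
  rw [motzkin_matrix_eq_mul_mul_transpose,
    (isAlternating_sub_transpose _).pfaffian_mul_mul_transpose, det_trinomialMatrix, one_mul,
    pfaffian_superdiagonal_sub_transpose]
  refine prod_congr rfl fun k _ => ?_
  push_cast
  ring
end

section
/- For every positive integer n, the determinant of the 2n×2n matrix whose (i,j) entry is (j−i)·M_{i+j−3} for 1 ≤ i,j ≤ 2n (with the convention that the (1,1) entry, whose factor j−i vanishes, is 0) equals (∏_{k=0}^{n−1} (4k+1))². -/
/-!
With `ω = 1 + t + t⁻¹`, the Motzkin numbers are the moments of the functional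
`L f = CT ((1 - t⁻²) f(ω))`, where `CT` takes the constant term. Hence the matrix is the Gram
matrix of the skew form `L (f g' - f' g)` on the monomials, and its determinant does not change
when these are replaced by another monic basis. For the polynomials `q_n` with
`q_n(ω) = tⁿ + t⁻ⁿ` (and `q_0 = 1`) one has `(t - t⁻¹) q_n'(ω) = n (tⁿ - t⁻ⁿ)`. Since
`1 - t⁻² = t⁻¹ (t - t⁻¹)`, the form pairs `q_i` only with `q_{i ± 1}`, and the Pfaffian of the
resulting tridiagonal matrix is the product of every other superdiagonal entry.
-/

open LaurentPolynomial Polynomial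

section Determinants

variable {R : Type*} [CommRing R]

/-- The skew-symmetric tridiagonal `m × m` matrix with superdiagonal `a 0, a 1, …`. -/
def skewTridiagonal (a : ℕ → R) (m : ℕ) : Matrix (Fin m) (Fin m) R :=
  Matrix.of fun i j =>
    if j.val = i.val + 1 then a i else if i.val = j.val + 1 then -a j else 0

theorem skewTridiagonal_submatrix_succ_succ (a : ℕ → R) (m : ℕ) :
    (skewTridiagonal a (m + 2)).submatrix (Fin.succ ∘ Fin.succ) (Fin.succ ∘ Fin.succ) =
      skewTridiagonal (fun k => a (k + 2)) m := by
  ext i j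
  simp [skewTridiagonal]

theorem det_skewTridiagonal_add_two (a : ℕ → R) (m : ℕ) :
    (skewTridiagonal a (m + 2)).det =
      a 0 ^ 2 * (skewTridiagonal (fun k => a (k + 2)) m).det := by
  have row_zero (j : Fin (m + 2)) (hj : j ≠ 1) : skewTridiagonal a (m + 2) 0 j = 0 := by
    have : j.val ≠ 1 := fun h => hj (Fin.ext (by simpa using h))
    simp [skewTridiagonal, this]
  have column_zero (i : Fin (m + 1)) (hi : i ≠ 0) : skewTridiagonal a (m + 2) i.succ 0 = 0 := by
    have : i.val ≠ 0 := fun h => hi (Fin.ext h)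
    simp [skewTridiagonal, this]
  have entry_zero_one : skewTridiagonal a (m + 2) 0 1 = a 0 := by simp [skewTridiagonal]
  have entry_one_zero : skewTridiagonal a (m + 2) 1 0 = -a 0 := by simp [skewTridiagonal]
  have succAbove_one_comp_succ :
      (Fin.succAbove (1 : Fin (m + 2))) ∘ Fin.succ = Fin.succ ∘ (Fin.succ : Fin m → _) := by
    funext j
    rw [← Fin.succ_zero_eq_one, Function.comp_apply, Fin.succ_succAbove_succ, Fin.succAbove_zero,
      Function.comp_apply]
  rw [Matrix.det_succ_row_zero, Finset.sum_eq_single 1, Matrix.det_succ_column_zero,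
    Finset.sum_eq_single 0, Matrix.submatrix_submatrix, Fin.succAbove_zero,
    succAbove_one_comp_succ, skewTridiagonal_submatrix_succ_succ]
  · rw [Matrix.submatrix_apply, Fin.succAbove_ne_zero_zero one_ne_zero, entry_zero_one,
      Fin.succ_zero_eq_one, entry_one_zero, Fin.val_zero, Fin.val_one]
    ring
  · intro i _ hi
    simp [column_zero i hi]
  · simp
  · intro j _ hj
    simp [row_zero j hj]
  · simp

theorem det_skewTridiagonal (a : ℕ → R) (n : ℕ) :
    (skewTridiagonal a (2 * n)).det = (∏ k ∈ Finset.range n, a (2 * k)) ^ 2 := by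
  induction n generalizing a with
  | zero => simp
  | succ n ih =>
    rw [Nat.mul_succ, det_skewTridiagonal_add_two, ih, Finset.prod_range_succ', mul_pow, mul_comm]
    simp only [Nat.mul_succ, mul_zero]

theorem det_bilin_X_pow_eq_of_isMonicOfDegree {N : ℕ} (B : R[X] →ₗ[R] R[X] →ₗ[R] R)
    {q : Fin N → R[X]} (hq : ∀ i, IsMonicOfDegree (q i) i) :
    (Matrix.of fun i j : Fin N => B (X ^ i.val) (X ^ j.val)).det =
      (Matrix.of fun i j : Fin N => B (q i) (q j)).det := by
  set P : Matrix (Fin N) (Fin N) R := Matrix.of fun i j => (q j).coeff i with hP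
  have det_P : P.det = 1 :=
    Matrix.det_matrixOfPolynomials q (fun i => (hq i).natDegree_eq) fun i => (hq i).monic
  have expand (i : Fin N) : q i = ∑ k : Fin N, (q i).coeff k • X ^ k.val := by
    rw [Fin.sum_univ_eq_sum_range fun k => (q i).coeff k • (X : R[X]) ^ k]
    simp only [Polynomial.smul_eq_C_mul, C_mul_X_pow_eq_monomial]
    exact as_sum_range' _ N ((hq i).natDegree_eq.trans_lt i.isLt)
  have change_basis : (Matrix.of fun i j : Fin N => B (q i) (q j)) =
      P.transpose * (Matrix.of fun i j : Fin N => B (X ^ i.val) (X ^ j.val)) * P := by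
    ext i j
    rw [Matrix.of_apply, expand i, expand j]
    simp only [map_sum, map_smul, LinearMap.sum_apply, LinearMap.smul_apply, smul_eq_mul, hP,
      Matrix.mul_apply, Matrix.transpose_apply, Matrix.of_apply, Finset.sum_mul, Finset.mul_sum]
    exact Finset.sum_congr rfl fun k _ => Finset.sum_congr rfl fun l _ => by ring
  rw [change_basis, Matrix.det_mul, Matrix.det_mul, Matrix.det_transpose, det_P, one_mul, mul_one]

end Determinants

section Dickson

variable {R : Type*} [CommRing R]

theorem isMonicOfDegree_dickson_succ [Nontrivial R] (k : ℕ) (a : R) (n : ℕ) :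
    IsMonicOfDegree (dickson k a (n + 1)) (n + 1) := by
  induction n using Nat.twoStepInduction with
  | zero => simpa using isMonicOfDegree_X R
  | one =>
    rw [dickson_add_two]
    refine ((isMonicOfDegree_X R).mul (n := 1) (isMonicOfDegree_X R)).sub ?_
    have constant : Polynomial.C a * dickson k a 0 = Polynomial.C (a * (3 - k)) := by
      simp only [dickson_zero, map_mul, map_sub, map_ofNat, map_natCast]
    rw [constant, natDegree_C]
    exact two_pos
  | more n ih₀ ih₁ =>
    rw [dickson_add_two, show n + 2 + 1 = 1 + (n + 1 + 1) by ring]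
    refine ((isMonicOfDegree_X R).mul ih₁).sub ((natDegree_C_mul_le _ _).trans_lt ?_)
    rw [ih₀.natDegree_eq]
    lia

variable {A : Type*} [CommRing A] [Algebra R A]

theorem aeval_add_dickson_one_one {x y : A} (h : x * y = 1) (n : ℕ) :
    aeval (x + y) (dickson 1 (1 : R) n) = x ^ n + y ^ n := by
  rw [aeval_def, eval₂_eq_eval_map, map_dickson, map_one, dickson_one_one_eval_add_inv x y h]

theorem sub_mul_aeval_add_derivative_dickson_one_one {x y : A} (h : x * y = 1) (n : ℕ) :
    (x - y) * aeval (x + y) (derivative (dickson 1 (1 : R) n)) = n * (x ^ n - y ^ n) := by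
  induction n using Nat.twoStepInduction with
  | zero => simp
  | one => simp
  | more n ih₀ ih₁ =>
    simp only [dickson_add_two, derivative_mul, derivative_X, map_sub, map_add,
      map_mul, aeval_X, map_one, one_mul, aeval_add_dickson_one_one h]
    push_cast at ih₁ ⊢
    linear_combination (x + y) * ih₁ - ih₀ + n * (x ^ n - y ^ n) * h

end Dickson

theorem catalan_add_choose_succ (k : ℕ) :
    catalan k + (2 * k).choose (k + 1) = (2 * k).choose k := by
  have h_catalan := succ_mul_catalan_eq_centralBinom k
  have h_choose := Nat.choose_succ_right_eq (2 * k) k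
  rw [Nat.centralBinom_eq_two_mul_choose] at h_catalan
  rw [show 2 * k - k = k by lia] at h_choose
  refine Nat.eq_of_mul_eq_mul_left k.succ_pos ?_
  linarith

theorem motzkin_eq_sum_choose_mul_catalan (n : ℕ) :
    motzkin n = ∑ k ∈ Finset.range (n + 1), (n.choose (2 * k) * catalan k : ℚ) := by
  refine Finset.sum_congr rfl fun k _ => ?_
  have h := congrArg (Nat.cast (R := ℚ)) (succ_mul_catalan_eq_centralBinom k)
  rw [Nat.centralBinom_eq_two_mul_choose] at h
  push_cast at h
  field_simp
  linear_combination -(n.choose (2 * k) : ℚ) * h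

section Functional

variable (R : Type*) [CommRing R]

/-- The linear functional taking a Laurent polynomial to its coefficient of `T ^ 0`. -/
noncomputable def constantTerm : R[T;T⁻¹] →ₗ[R] R :=
  Finsupp.lapply 0 ∘ₗ (AddMonoidAlgebra.coeffLinearEquiv R).toLinearMap

@[simp]
theorem constantTerm_T (n : ℤ) : constantTerm R (T n) = if n = 0 then 1 else 0 :=
  T_apply 0 n

/-- The step polynomial `1 + t + t⁻¹` of Motzkin paths. -/
noncomputable def motzkinStep : R[T;T⁻¹] := 1 + (T 1 + T (-1))

/-- The functional `f ↦ CT ((1 - t⁻²) f(1 + t + t⁻¹))`, whose moments are the Motzkin numbers.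
The factor `1 - t⁻²` implements the reflection principle for Motzkin paths. -/
noncomputable def motzkinFunctional : R[X] →ₗ[R] R :=
  constantTerm R ∘ₗ LinearMap.mulLeft R (1 - T (-2)) ∘ₗ (aeval (motzkinStep R)).toLinearMap

variable {R}

theorem constantTerm_natCast_mul (n : ℕ) (f : R[T;T⁻¹]) :
    constantTerm R (n * f) = n * constantTerm R f := by
  rw [← nsmul_eq_mul, map_nsmul, nsmul_eq_mul]

theorem T_one_mul_T_neg_one : (T 1 * T (-1) : R[T;T⁻¹]) = 1 := by
  rw [← T_add, add_neg_cancel, T_zero]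

theorem constantTerm_T_mul_T_one_add_T_neg_one_pow (e : ℤ) (m : ℕ) :
    constantTerm R (T e * (T 1 + T (-1)) ^ m) =
      ∑ r ∈ Finset.range (m + 1), if e + 2 * r - m = 0 then (m.choose r : R) else 0 := by
  rw [add_pow, Finset.mul_sum, map_sum]
  refine Finset.sum_congr rfl fun r hr => ?_
  have hrm : r ≤ m := by simpa [Nat.lt_succ_iff] using hr
  have monomial_eq : T e * (T 1 ^ r * T (-1) ^ (m - r) * (m.choose r : R[T;T⁻¹])) =
      m.choose r • T (e + 2 * r - m) := by
    rw [T_pow, T_pow, ← T_add, ← mul_assoc, ← T_add, mul_comm, nsmul_eq_mul]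
    congr 2
    push_cast [hrm]
    ring
  rw [monomial_eq, map_nsmul, constantTerm_T]
  simp

theorem constantTerm_T_neg_mul_pow_even (s k : ℕ) :
    constantTerm R (T (-(2 * s)) * (T 1 + T (-1)) ^ (2 * k)) = (2 * k).choose (k + s) := by
  have index (r : ℕ) : -(2 * s : ℤ) + 2 * r - (2 * k : ℕ) = 0 ↔ k + s = r := by lia
  simp only [constantTerm_T_mul_T_one_add_T_neg_one_pow, index, Finset.sum_ite_eq,
    Finset.mem_range]
  split_ifs with h
  · rfl
  · rw [Nat.choose_eq_zero_of_lt (by lia), Nat.cast_zero]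

theorem constantTerm_T_neg_mul_pow_odd (s k : ℕ) :
    constantTerm R (T (-(2 * s)) * (T 1 + T (-1)) ^ (2 * k + 1)) = 0 := by
  rw [constantTerm_T_mul_T_one_add_T_neg_one_pow]
  exact Finset.sum_eq_zero fun r _ => if_neg (by lia)

theorem motzkinFunctional_X_sub_one_pow (m : ℕ) :
    motzkinFunctional R ((X - 1) ^ m) =
      constantTerm R (T (-(2 * (0 : ℕ))) * (T 1 + T (-1)) ^ m) -
        constantTerm R (T (-(2 * (1 : ℕ))) * (T 1 + T (-1)) ^ m) := by
  simp [motzkinFunctional, motzkinStep, sub_mul]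

theorem motzkinFunctional_X_sub_one_pow_even (k : ℕ) :
    motzkinFunctional R ((X - 1) ^ (2 * k)) = catalan k := by
  rw [motzkinFunctional_X_sub_one_pow, constantTerm_T_neg_mul_pow_even,
    constantTerm_T_neg_mul_pow_even, add_zero, ← catalan_add_choose_succ, Nat.cast_add,
    add_sub_cancel_right]

theorem motzkinFunctional_X_sub_one_pow_odd (k : ℕ) :
    motzkinFunctional R ((X - 1) ^ (2 * k + 1)) = 0 := by
  rw [motzkinFunctional_X_sub_one_pow, constantTerm_T_neg_mul_pow_odd,
    constantTerm_T_neg_mul_pow_odd, sub_zero]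

theorem motzkinFunctional_X_pow (n : ℕ) :
    motzkinFunctional R (X ^ n) =
      ∑ k ∈ Finset.range (n + 1), (n.choose (2 * k) * catalan k : R) := by
  have binomial_expansion : motzkinFunctional R (X ^ n) = ∑ m ∈ Finset.range (n + 1),
      (n.choose m : R) * motzkinFunctional R ((X - 1) ^ m) := by
    conv_lhs => rw [← sub_add_cancel X (1 : R[X]), add_pow, map_sum]
    refine Finset.sum_congr rfl fun m _ => ?_
    rw [one_pow, mul_one, mul_comm, ← nsmul_eq_mul, map_nsmul, nsmul_eq_mul]
  have choose_eq_zero (m : ℕ) (hm : m ∉ Finset.range (n + 1)) : (n.choose m : R) = 0 := by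
    rw [Nat.choose_eq_zero_of_lt (by simpa using hm), Nat.cast_zero]
  rw [binomial_expansion,
    Finset.sum_subset (Finset.range_subset_range.mpr (show n + 1 ≤ 2 * n + 1 by lia))
      fun m _ hm => by rw [choose_eq_zero m hm, zero_mul]]
  symm
  refine Finset.sum_of_injOn (2 * ·) (mul_right_injective₀ two_ne_zero).injOn ?_ ?_ ?_
  · intro k hk
    rw [Finset.mem_coe, Finset.mem_range] at hk ⊢
    lia
  · intro m hm hm_not_even
    obtain ⟨k, rfl | rfl⟩ := m.even_or_odd'
    · rw [Finset.mem_range] at hm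
      have hk : k ∈ Finset.range (n + 1) := Finset.mem_range.mpr (by lia)
      exact absurd ⟨k, hk, rfl⟩ hm_not_even
    · rw [motzkinFunctional_X_sub_one_pow_odd, mul_zero]
  · intro k _
    rw [motzkinFunctional_X_sub_one_pow_even]

theorem motzkinFunctional_rat_X_pow (n : ℕ) : motzkinFunctional ℚ (X ^ n) = motzkin n := by
  rw [motzkinFunctional_X_pow, motzkin_eq_sum_choose_mul_catalan]

variable (R) in
/-- The monic polynomials `q_n` with `q_n(1 + t + t⁻¹) = tⁿ + t⁻ⁿ` for `n ≥ 1`. The value at `0`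
is `1` rather than `2`, the value of the shifted Dickson polynomial, to make `q_0` monic. -/
noncomputable def shiftedDickson : ℕ → R[X]
  | 0 => 1
  | n + 1 => (dickson 1 1 (n + 1)).comp (X - 1)

theorem isMonicOfDegree_shiftedDickson [Nontrivial R] :
    ∀ n, IsMonicOfDegree (shiftedDickson R n) n
  | 0 => isMonicOfDegree_zero_iff.mpr rfl
  | n + 1 => by
    simpa [shiftedDickson] using
      (isMonicOfDegree_dickson_succ 1 1 n).comp one_ne_zero (isMonicOfDegree_X_sub_one (1 : R))

theorem aeval_motzkinStep_comp_X_sub_one (f : R[X]) :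
    aeval (motzkinStep R) (f.comp (X - 1)) = aeval (T 1 + T (-1)) f := by
  simp [aeval_comp, motzkinStep]

theorem aeval_shiftedDickson {n : ℕ} (hn : n ≠ 0) :
    aeval (motzkinStep R) (shiftedDickson R n) = T n + T (-n) := by
  obtain ⟨n, rfl⟩ := Nat.exists_eq_succ_of_ne_zero hn
  rw [shiftedDickson, aeval_motzkinStep_comp_X_sub_one,
    aeval_add_dickson_one_one T_one_mul_T_neg_one, T_pow, T_pow]
  simp

theorem sub_mul_aeval_derivative_shiftedDickson (n : ℕ) :
    (T 1 - T (-1)) * aeval (motzkinStep R) (derivative (shiftedDickson R n)) =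
      (n : R[T;T⁻¹]) * (T n - T (-n)) := by
  cases n with
  | zero => simp [shiftedDickson]
  | succ n =>
    have derivative_comp_shift : derivative (shiftedDickson R (n + 1)) =
        (derivative (dickson 1 (1 : R) (n + 1))).comp (X - 1) := by
      simp [shiftedDickson, derivative_comp]
    rw [derivative_comp_shift, aeval_motzkinStep_comp_X_sub_one,
      sub_mul_aeval_add_derivative_dickson_one_one T_one_mul_T_neg_one, T_pow, T_pow]
    simp

variable (R) in
/-- The alternating form `(f, g) ↦ L (f g' - f' g)`, where `L` is `motzkinFunctional`. -/
noncomputable def motzkinForm : R[X] →ₗ[R] R[X] →ₗ[R] R :=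
  (wronskianBilin R).compr₂ (motzkinFunctional R)

theorem motzkinForm_shiftedDickson_eq_constantTerm (i j : ℕ) :
    motzkinForm R (shiftedDickson R i) (shiftedDickson R j) =
      constantTerm R (T (-1) *
        (aeval (motzkinStep R) (shiftedDickson R i) * ((j : R[T;T⁻¹]) * (T j - T (-j))) -
          (i : R[T;T⁻¹]) * (T i - T (-i)) * aeval (motzkinStep R) (shiftedDickson R j))) := by
  have weight : (1 - T (-2) : R[T;T⁻¹]) = T (-1) * (T 1 - T (-1)) := by
    rw [mul_sub, ← T_add, ← T_add, neg_add_cancel, T_zero, ← two_mul, mul_neg_one]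
  rw [← sub_mul_aeval_derivative_shiftedDickson, ← sub_mul_aeval_derivative_shiftedDickson,
    motzkinForm, LinearMap.compr₂_apply, wronskianBilin_apply, wronskian, motzkinFunctional,
    LinearMap.comp_apply, LinearMap.comp_apply, LinearMap.mulLeft_apply,
    AlgHom.toLinearMap_apply, weight]
  congr 1
  rw [map_sub, map_mul, map_mul]
  ring

theorem motzkinForm_shiftedDickson_zero {j : ℕ} (hj : j ≠ 0) :
    motzkinForm R (shiftedDickson R 0) (shiftedDickson R j) = if j = 1 then 1 else 0 := by
  rw [motzkinForm_shiftedDickson_eq_constantTerm]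
  have expand : T (-1) * (aeval (motzkinStep R) (shiftedDickson R 0) *
      ((j : R[T;T⁻¹]) * (T j - T (-j))) - ((0 : ℕ) : R[T;T⁻¹]) * (T (0 : ℕ) - T (-(0 : ℕ))) *
        aeval (motzkinStep R) (shiftedDickson R j)) =
      (j : R[T;T⁻¹]) * (T (j - 1) - T (-j - 1)) := by
    simp only [shiftedDickson, map_one, Nat.cast_zero, zero_mul, sub_eq_add_neg, T_add]
    ring
  rw [expand, constantTerm_natCast_mul, map_sub, constantTerm_T, constantTerm_T,
    if_neg (show -(j : ℤ) - 1 ≠ 0 by lia)]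
  by_cases h : j = 1
  · simp [h]
  · rw [if_neg (by lia), if_neg h, sub_zero, mul_zero]

theorem motzkinForm_shiftedDickson_of_pos_of_lt {i j : ℕ} (hi : 0 < i) (hij : i < j) :
    motzkinForm R (shiftedDickson R i) (shiftedDickson R j) =
      if j = i + 1 then 2 * (i : R) + 1 else 0 := by
  have expand : T (-1) * ((T i + T (-i)) * ((j : R[T;T⁻¹]) * (T j - T (-j))) -
      (i : R[T;T⁻¹]) * (T i - T (-i)) * (T j + T (-j))) =
      (j : R[T;T⁻¹]) * (T (i + j - 1) - T (i - j - 1) + T (j - i - 1) - T (-i - j - 1)) -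
        (i : R[T;T⁻¹]) * (T (i + j - 1) + T (i - j - 1) - T (j - i - 1) - T (-i - j - 1)) := by
    simp only [sub_eq_add_neg, T_add]
    ring
  rw [motzkinForm_shiftedDickson_eq_constantTerm, aeval_shiftedDickson hi.ne',
    aeval_shiftedDickson (hi.trans hij).ne', expand]
  simp only [map_sub, map_add, constantTerm_natCast_mul, constantTerm_T]
  rw [if_neg (show (i + j - 1 : ℤ) ≠ 0 by lia), if_neg (show (i - j - 1 : ℤ) ≠ 0 by lia),
    if_neg (show (-i - j - 1 : ℤ) ≠ 0 by lia)]
  by_cases h : j = i + 1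
  · rw [if_pos (by lia), if_pos h, h]
    push_cast
    ring
  · rw [if_neg (by lia), if_neg h]
    ring

theorem motzkinForm_shiftedDickson_of_lt {i j : ℕ} (hij : i < j) :
    motzkinForm R (shiftedDickson R i) (shiftedDickson R j) =
      if j = i + 1 then 2 * (i : R) + 1 else 0 := by
  obtain rfl | hi := i.eq_zero_or_pos
  · simpa using motzkinForm_shiftedDickson_zero hij.ne'
  · exact motzkinForm_shiftedDickson_of_pos_of_lt hi hij

theorem motzkinForm_neg (f g : R[X]) : -motzkinForm R f g = motzkinForm R g f := by
  simp only [motzkinForm, LinearMap.compr₂_apply, wronskianBilin_apply, ← map_neg,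
    wronskian_neg_eq]

theorem motzkinForm_self (f : R[X]) : motzkinForm R f f = 0 := by
  rw [motzkinForm, LinearMap.compr₂_apply, wronskianBilin_apply, wronskian_self_eq_zero, map_zero]

theorem motzkinForm_shiftedDickson (i j : ℕ) :
    motzkinForm R (shiftedDickson R i) (shiftedDickson R j) =
      if j = i + 1 then 2 * (i : R) + 1 else if i = j + 1 then -(2 * (j : R) + 1) else 0 := by
  rcases lt_trichotomy i j with hij | rfl | hji
  · rw [motzkinForm_shiftedDickson_of_lt hij, if_neg (show i ≠ j + 1 by lia)]
  · simp [motzkinForm_self]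
  · rw [← motzkinForm_neg, motzkinForm_shiftedDickson_of_lt hji,
      if_neg (show j ≠ i + 1 by lia), neg_ite, neg_zero]

theorem det_motzkinForm_X_pow (n : ℕ) :
    (Matrix.of fun i j : Fin (2 * n) => motzkinForm R (X ^ i.val) (X ^ j.val)).det =
      (∏ k ∈ Finset.range n, (4 * (k : R) + 1)) ^ 2 := by
  nontriviality R
  have gram_eq : (Matrix.of fun i j : Fin (2 * n) =>
      motzkinForm R (shiftedDickson R i) (shiftedDickson R j)) =
        skewTridiagonal (fun k => 2 * (k : R) + 1) (2 * n) := by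
    ext i j
    exact motzkinForm_shiftedDickson i j
  rw [det_bilin_X_pow_eq_of_isMonicOfDegree _ fun i => isMonicOfDegree_shiftedDickson i.val,
    gram_eq, det_skewTridiagonal]
  congr 1
  refine Finset.prod_congr rfl fun k _ => ?_
  push_cast
  ring

theorem wronskian_X_pow (i j : ℕ) :
    wronskian (X ^ i : R[X]) (X ^ j) = ((j : R) - i) • X ^ (i + j - 1) := by
  have X_pow_mul_derivative (a b : ℕ) :
      (X ^ a : R[X]) * derivative (X ^ b) = (b : R) • X ^ (a + b - 1) := by
    cases b with
    | zero => simp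
    | succ b =>
      rw [derivative_X_pow, Polynomial.smul_eq_C_mul, mul_left_comm, ← pow_add]
      rfl
  rw [wronskian, mul_comm (derivative _), X_pow_mul_derivative, X_pow_mul_derivative,
    add_comm j i, sub_smul]

theorem motzkinForm_X_pow (i j : ℕ) :
    motzkinForm ℚ (X ^ i) (X ^ j) = ((j : ℚ) - i) * motzkin (i + j - 1) := by
  rw [motzkinForm, LinearMap.compr₂_apply, wronskianBilin_apply, wronskian_X_pow, map_smul,
    motzkinFunctional_rat_X_pow, smul_eq_mul]

end Functional

/-- For every positive integer `n`, the determinant of the `2n × 2n` skew-symmetric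
matrix with entries `(j-i)·M_{i+j-3}` (1-based; here 0-based, so the entry at
`(i,j)` is `(j-i)·M_{i+j-1}`, the `(0,0)` entry being `0`) equals
`(∏_{k=0}^{n-1} (4k+1))²`. -/
theorem det_motzkin (n : ℕ) (hn : 1 ≤ n) :
    (Matrix.of fun i j : Fin (2 * n) =>
        ((j.val : ℚ) - (i.val : ℚ)) * motzkin (i.val + j.val - 1)).det =
      (∏ k ∈ Finset.range n, (4 * (k : ℚ) + 1)) ^ 2 := by
  simp only [← motzkinForm_X_pow]
  exact det_motzkinForm_X_pow n
end
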